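/- Let t ≥ 2 and let G be a graph on n vertices with m edges and spectral radius λ. Then the number of (unlabelled) copies of K_{t,t} in G satisfies #K_{t,t}(G) ≥ B_t (λ²/m)^{t(t-1)} m^t − (C(2t,2)/(2(t!)²)) n^{2t−1}, where B_t = 2^{−(t−1)²}/(t!)². -/

import Mathlib

open scoped Classical BigOperators

/-- Adjacency matrix of a simple graph on `Fin n`, with real entries. -/
noncomputable def adjMat {n : ℕ} (G : SimpleGraph (Fin n)) : Matrix (Fin n) (Fin n) ℝ :=
  fun i j => if G.Adj i j then 1 else 0

/-- Spectral radius (largest real eigenvalue) of a real matrix. -/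
noncomputable def specRad {α : Type*} [Fintype α] (A : Matrix α α ℝ) : ℝ :=
  sSup {μ : ℝ | ∃ x : α → ℝ, x ≠ 0 ∧ A.mulVec x = μ • x}

/-- The ℓ^p norm of a finitely supported real vector, for a real exponent `p`. -/
noncomputable def pNorm {α : Type*} [Fintype α] (p : ℝ) (x : α → ℝ) : ℝ :=
  (∑ i, |x i| ^ p) ^ (1 / p)

/-- The ℓ^p → ℓ^r operator norm of a real matrix. -/
noncomputable def opNorm {α β : Type*} [Fintype α] [Fintype β] (p r : ℝ)
    (A : Matrix β α ℝ) : ℝ :=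
  sSup {c : ℝ | ∃ x : α → ℝ, x ≠ 0 ∧ c = pNorm r (A.mulVec x) / pNorm p x}

/-!
Write `T` for the number of homomorphisms `K_{t,t} → G`. Two applications of Hölder's inequality
bound the `ℓ^(t/(t-1)) → ℓ^t` norm of the adjacency matrix by `T ^ (1/t²)`. For an eigenvector `x`
of `λ`, testing this norm against `|x| ^ (2(t-1)/t)` controls the sum of
`(|x i| |x j|) ^ (2(t-1)/t)` over ordered adjacent pairs, and a power mean inequality over these
`2m` pairs compares it with the sum of `|x i| |x j|`, which is at least `|λ| ‖x‖²`. Hence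
`λ ^ (2t(t-1)) ≤ (2m) ^ (t(t-2)) T`. Finally, at most `C(2t,2) n ^ (2t-1)` of the homomorphisms
are not injective.
-/

section Holder

variable {ι : Type*} {s : Finset ι}

theorem sum_pow_mul_pow_pow_le {a b : ι → ℝ} (ha : ∀ i ∈ s, 0 ≤ a i) (hb : ∀ i ∈ s, 0 ≤ b i)
    (p q : ℕ) :
    (∑ i ∈ s, a i ^ p * b i ^ q) ^ (p + q)
      ≤ (∑ i ∈ s, a i ^ (p + q)) ^ p * (∑ i ∈ s, b i ^ (p + q)) ^ q := by
  rcases Nat.eq_zero_or_pos p with rfl | hp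
  · simp
  rcases Nat.eq_zero_or_pos q with rfl | hq
  · simp
  set A := ∑ i ∈ s, a i ^ (p + q)
  set B := ∑ i ∈ s, b i ^ (p + q)
  have hA : 0 ≤ A := Finset.sum_nonneg fun i hi => pow_nonneg (ha i hi) _
  have hB : 0 ≤ B := Finset.sum_nonneg fun i hi => pow_nonneg (hb i hi) _
  have hconj : (((p + q : ℕ) : ℝ) / p).HolderConjugate (((p + q : ℕ) : ℝ) / q) := by
    rw [Real.holderConjugate_iff, one_lt_div (by positivity)]
    refine ⟨by exact_mod_cast Nat.lt_add_of_pos_right hq, ?_⟩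
    push_cast
    field_simp
  have pow_rpow {x : ℝ} (hx : 0 ≤ x) {k : ℕ} (hk : 0 < k) :
      (x ^ k) ^ (((p + q : ℕ) : ℝ) / k) = x ^ (p + q) := by
    rw [← Real.rpow_natCast_mul hx, mul_div_cancel₀ _ (by positivity), Real.rpow_natCast]
  have rpow_pow {x : ℝ} (hx : 0 ≤ x) {k : ℕ} :
      (x ^ (1 / (((p + q : ℕ) : ℝ) / k))) ^ (p + q) = x ^ k := by
    rw [← Real.rpow_mul_natCast hx, one_div_div, div_mul_cancel₀ _ (by positivity),
      Real.rpow_natCast]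
  have holder : ∑ i ∈ s, a i ^ p * b i ^ q
      ≤ A ^ (1 / (((p + q : ℕ) : ℝ) / p)) * B ^ (1 / (((p + q : ℕ) : ℝ) / q)) := by
    have h := Real.inner_le_Lp_mul_Lq_of_nonneg s hconj
      (fun i hi => pow_nonneg (ha i hi) p) (fun i hi => pow_nonneg (hb i hi) q)
    rwa [Finset.sum_congr rfl fun i hi => pow_rpow (ha i hi) hp,
      Finset.sum_congr rfl fun i hi => pow_rpow (hb i hi) hq] at h
  have hnonneg : 0 ≤ ∑ i ∈ s, a i ^ p * b i ^ q :=
    Finset.sum_nonneg fun i hi => mul_nonneg (pow_nonneg (ha i hi) p) (pow_nonneg (hb i hi) q)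
  calc (∑ i ∈ s, a i ^ p * b i ^ q) ^ (p + q)
      ≤ (A ^ (1 / (((p + q : ℕ) : ℝ) / p)) * B ^ (1 / (((p + q : ℕ) : ℝ) / q))) ^ (p + q) :=
        pow_le_pow_left₀ hnonneg holder _
    _ = A ^ p * B ^ q := by rw [mul_pow, rpow_pow hA, rpow_pow hB]

theorem sum_mul_pow_pow_le {w c : ι → ℝ} (hw : ∀ i ∈ s, 0 ≤ w i) (hc : ∀ i ∈ s, 0 ≤ c i)
    (p q : ℕ) :
    (∑ i ∈ s, w i * c i ^ p) ^ (p + q)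
      ≤ (∑ i ∈ s, w i) ^ q * (∑ i ∈ s, w i * c i ^ (p + q)) ^ p := by
  rcases Nat.eq_zero_or_pos (p + q) with h | h
  · obtain ⟨rfl, rfl⟩ := Nat.add_eq_zero_iff.mp h
    simp
  set u : ι → ℝ := fun i => w i ^ ((p + q : ℕ) : ℝ)⁻¹
  have hu : ∀ i ∈ s, 0 ≤ u i := fun i hi => Real.rpow_nonneg (hw i hi) _
  have u_pow : ∀ i ∈ s, u i ^ (p + q) = w i := fun i hi =>
    Real.rpow_inv_natCast_pow (hw i hi) h.ne'
  have holder := sum_pow_mul_pow_pow_le (fun i hi => mul_nonneg (hu i hi) (hc i hi)) hu p q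
  have hsplit : ∀ i ∈ s, (u i * c i) ^ p * u i ^ q = w i * c i ^ p := fun i hi => by
    rw [← u_pow i hi]
    ring
  have hmoment : ∀ i ∈ s, (u i * c i) ^ (p + q) = w i * c i ^ (p + q) := fun i hi => by
    rw [mul_pow, u_pow i hi]
  rwa [Finset.sum_congr rfl hsplit, Finset.sum_congr rfl hmoment, Finset.sum_congr rfl u_pow,
    mul_comm] at holder

end Holder

section Biclique

variable {α β : Type*} [Fintype α]

/-- The weighted number of common neighbours of the vertices `v k`, where `A i j` is the weight of
the edge `ij`. -/
noncomputable def codegree {κ : Type*} [Fintype κ] (A : Matrix α β ℝ) (v : κ → β) : ℝ :=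
  ∑ i, ∏ k, A i (v k)

theorem codegree_nonneg {κ : Type*} [Fintype κ] {A : Matrix α β ℝ} (hA : ∀ i j, 0 ≤ A i j)
    (v : κ → β) : 0 ≤ codegree A v :=
  Finset.sum_nonneg fun _ _ => Finset.prod_nonneg fun _ _ => hA _ _

variable [Fintype β]

/-- The weighted number of homomorphisms from `K_{s,t}` to the bipartite graph on `α ⊕ β` with
edge weights `A` that send the side of size `s` to `α` and the side of size `t` to `β`. For the
adjacency matrix of a graph this counts the homomorphisms from `K_{s,t}` to the graph itself. -/
noncomputable def bicliqueSum (s t : ℕ) (A : Matrix α β ℝ) : ℝ :=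
  ∑ u : Fin s → α, ∑ v : Fin t → β, ∏ j, ∏ k, A (u j) (v k)

theorem bicliqueSum_nonneg {A : Matrix α β ℝ} (hA : ∀ i j, 0 ≤ A i j) (s t : ℕ) :
    0 ≤ bicliqueSum s t A :=
  Finset.sum_nonneg fun _ _ => Finset.sum_nonneg fun _ _ =>
    Finset.prod_nonneg fun _ _ => Finset.prod_nonneg fun _ _ => hA _ _

theorem bicliqueSum_eq_sum_codegree_pow (s t : ℕ) (A : Matrix α β ℝ) :
    bicliqueSum s t A = ∑ v : Fin t → β, codegree A v ^ s := by
  simp only [codegree, Fintype.sum_pow]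
  exact Finset.sum_comm

theorem sum_sum_mul_pow_eq_sum_codegree_mul (t : ℕ) (A : Matrix α β ℝ) (c : β → ℝ) :
    ∑ i, (∑ j, A i j * c j) ^ t = ∑ v : Fin t → β, codegree A v * ∏ k, c (v k) := by
  simp only [codegree, Fintype.sum_pow, Finset.prod_mul_distrib, Finset.sum_mul]
  exact Finset.sum_comm

theorem sum_sum_mul_pow_pow_le_bicliqueSum_mul {A : Matrix α β ℝ} (hA : ∀ i j, 0 ≤ A i j)
    {c : β → ℝ} (hc : ∀ j, 0 ≤ c j) (s t : ℕ) :
    (∑ i, (∑ j, A i j * c j ^ s) ^ t) ^ (s + 1)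
      ≤ bicliqueSum (s + 1) t A * (∑ j, c j ^ (s + 1)) ^ (t * s) := by
  have hprod : ∑ v : Fin t → β, (∏ k, c (v k)) ^ (s + 1) = (∑ j, c j ^ (s + 1)) ^ t := by
    simp only [Fintype.sum_pow, Finset.prod_pow]
  have holder := sum_pow_mul_pow_pow_le (s := Finset.univ)
    (b := fun v : Fin t → β => ∏ k, c (v k)) (fun v _ => codegree_nonneg hA v)
    (fun v _ => Finset.prod_nonneg fun k _ => hc (v k)) 1 s
  simpa only [sum_sum_mul_pow_eq_sum_codegree_mul, bicliqueSum_eq_sum_codegree_pow,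
    Finset.prod_pow, pow_one, add_comm 1 s, hprod, pow_mul] using holder

/-- Dual form of the statement that `A` has operator norm at most `(bicliqueSum s t A) ^ (1 / st)`
from `ℓ^(s / (s - 1))` to `ℓ^t`, with `s + 1` and `t + 1` in place of `s` and `t`. -/
theorem sum_sum_mul_pow_mul_pow_pow_le_bicliqueSum_mul {A : Matrix α β ℝ}
    (hA : ∀ i j, 0 ≤ A i j) {b : α → ℝ} (hb : ∀ i, 0 ≤ b i) {c : β → ℝ} (hc : ∀ j, 0 ≤ c j)
    (s t : ℕ) :
    (∑ i, ∑ j, A i j * (b i ^ t * c j ^ s)) ^ ((s + 1) * (t + 1))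
      ≤ bicliqueSum (s + 1) (t + 1) A
        * ((∑ i, b i ^ (t + 1)) ^ ((s + 1) * t) * (∑ j, c j ^ (s + 1)) ^ (s * (t + 1))) := by
  set a : α → ℝ := fun i => ∑ j, A i j * c j ^ s
  set S := ∑ i, b i ^ (t + 1)
  have ha : ∀ i, 0 ≤ a i := fun i =>
    Finset.sum_nonneg fun j _ => mul_nonneg (hA i j) (pow_nonneg (hc j) s)
  have hS : 0 ≤ S := Finset.sum_nonneg fun i _ => pow_nonneg (hb i) _
  have hform : ∑ i, ∑ j, A i j * (b i ^ t * c j ^ s) = ∑ i, a i * b i ^ t := by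
    simp only [a, Finset.sum_mul, mul_assoc, mul_comm (b _ ^ t)]
  have hform_nonneg : 0 ≤ ∑ i, a i * b i ^ t :=
    Finset.sum_nonneg fun i _ => mul_nonneg (ha i) (pow_nonneg (hb i) t)
  have holder : (∑ i, a i * b i ^ t) ^ (t + 1) ≤ (∑ i, a i ^ (t + 1)) * S ^ t := by
    simpa only [pow_one, add_comm 1 t] using
      sum_pow_mul_pow_pow_le (s := Finset.univ) (fun i _ => ha i) (fun i _ => hb i) 1 t
  calc (∑ i, ∑ j, A i j * (b i ^ t * c j ^ s)) ^ ((s + 1) * (t + 1))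
      = ((∑ i, a i * b i ^ t) ^ (t + 1)) ^ (s + 1) := by rw [hform, ← pow_mul, mul_comm (s + 1)]
    _ ≤ ((∑ i, a i ^ (t + 1)) * S ^ t) ^ (s + 1) := by gcongr
    _ = (∑ i, a i ^ (t + 1)) ^ (s + 1) * (S ^ t) ^ (s + 1) := mul_pow _ _ _
    _ ≤ bicliqueSum (s + 1) (t + 1) A * (∑ j, c j ^ (s + 1)) ^ ((t + 1) * s)
          * (S ^ t) ^ (s + 1) := by
        gcongr
        exact sum_sum_mul_pow_pow_le_bicliqueSum_mul hA hc s (t + 1)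
    _ = _ := by ring

end Biclique

section Spectral

variable {V : Type*} [Fintype V] {A : Matrix V V ℝ} {t : ℕ}

theorem sum_sum_mul_mul_pow_le_bicliqueSum_mul (hA : ∀ i j, 0 ≤ A i j) (ht : 2 ≤ t)
    {y : V → ℝ} (hy : ∀ i, 0 ≤ y i) :
    (∑ i, ∑ j, A i j * (y i * y j)) ^ (2 * t * (t - 1))
      ≤ (∑ i, ∑ j, A i j) ^ (t * (t - 2)) * bicliqueSum t t A
        * (∑ i, y i ^ 2) ^ (2 * t * (t - 1)) := by
  obtain ⟨r, rfl⟩ := Nat.exists_eq_add_of_le' ht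
  simp only [Nat.add_sub_cancel, show r + 2 - 1 = r + 1 from rfl]
  set w : V → ℝ := fun i => y i ^ ((r + 2 : ℕ) : ℝ)⁻¹
  have hw : ∀ i, 0 ≤ w i := fun i => Real.rpow_nonneg (hy i) _
  have w_pow : ∀ i, w i ^ (r + 2) = y i := fun i => Real.rpow_inv_natCast_pow (hy i) (by omega)
  set M := ∑ i, ∑ j, A i j
  set F := ∑ i, ∑ j, A i j * (w i * w j) ^ (2 * (r + 1))
  have hM_nonneg : 0 ≤ M := Finset.sum_nonneg fun i _ => Finset.sum_nonneg fun j _ => hA i j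
  have hQ_nonneg : 0 ≤ ∑ i, ∑ j, A i j * (y i * y j) :=
    Finset.sum_nonneg fun i _ => Finset.sum_nonneg fun j _ =>
      mul_nonneg (hA i j) (mul_nonneg (hy i) (hy j))
  have power_mean : (∑ i, ∑ j, A i j * (y i * y j)) ^ (2 * (r + 1)) ≤ M ^ r * F ^ (r + 2) := by
    have h := sum_mul_pow_pow_le (s := (Finset.univ : Finset (V × V)))
      (fun p _ => hA p.1 p.2) (fun p _ => mul_nonneg (hw p.1) (hw p.2)) (r + 2) r
    rw [show r + 2 + r = 2 * (r + 1) by ring] at h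
    simpa only [Fintype.sum_prod_type, mul_pow (w _) (w _) (r + 2), w_pow] using h
  have operator_norm : F ^ ((r + 2) * (r + 2))
      ≤ bicliqueSum (r + 2) (r + 2) A * (∑ i, y i ^ 2) ^ (2 * (r + 2) * (r + 1)) := by
    have h := sum_sum_mul_pow_mul_pow_pow_le_bicliqueSum_mul hA (fun i => sq_nonneg (w i))
      (fun i => sq_nonneg (w i)) (r + 1) (r + 1)
    have hS : ∀ i, (w i ^ 2) ^ (r + 1 + 1) = y i ^ 2 := fun i => by rw [pow_right_comm, w_pow]
    simp only [hS, ← mul_pow, ← pow_mul, ← pow_add] at h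
    rwa [show (r + 1 + 1) * (r + 1) + (r + 1) * (r + 1 + 1) = 2 * (r + 2) * (r + 1) by ring] at h
  calc (∑ i, ∑ j, A i j * (y i * y j)) ^ (2 * (r + 2) * (r + 1))
      = ((∑ i, ∑ j, A i j * (y i * y j)) ^ (2 * (r + 1))) ^ (r + 2) := by ring
    _ ≤ (M ^ r * F ^ (r + 2)) ^ (r + 2) := by gcongr
    _ = M ^ ((r + 2) * r) * F ^ ((r + 2) * (r + 2)) := by ring
    _ ≤ M ^ ((r + 2) * r) * (bicliqueSum (r + 2) (r + 2) A
          * (∑ i, y i ^ 2) ^ (2 * (r + 2) * (r + 1))) := by gcongr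
    _ = _ := (mul_assoc _ _ _).symm

theorem abs_eigenvalue_mul_sum_sq_le (hA : ∀ i j, 0 ≤ A i j) {μ : ℝ} {x : V → ℝ}
    (hμ : A.mulVec x = μ • x) :
    |μ| * ∑ i, |x i| ^ 2 ≤ ∑ i, ∑ j, A i j * (|x i| * |x j|) := by
  rw [Finset.mul_sum]
  refine Finset.sum_le_sum fun i _ => ?_
  have hrow : |μ| * |x i| ≤ ∑ j, A i j * |x j| := by
    calc |μ| * |x i| = |∑ j, A i j * x j| := by
          rw [← abs_mul, ← smul_eq_mul, ← Pi.smul_apply, ← hμ, Matrix.mulVec, dotProduct]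
      _ ≤ ∑ j, |A i j * x j| := Finset.abs_sum_le_sum_abs _ _
      _ = ∑ j, A i j * |x j| := by simp only [abs_mul, abs_of_nonneg (hA _ _)]
  calc |μ| * |x i| ^ 2 = |μ| * |x i| * |x i| := by ring
    _ ≤ (∑ j, A i j * |x j|) * |x i| := by gcongr
    _ = ∑ j, A i j * (|x i| * |x j|) := by
        simp only [Finset.sum_mul, mul_assoc, mul_comm |x i|]

theorem abs_eigenvalue_pow_le_bicliqueSum (hA : ∀ i j, 0 ≤ A i j) (ht : 2 ≤ t) {μ : ℝ}
    {x : V → ℝ} (hx : x ≠ 0) (hμ : A.mulVec x = μ • x) :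
    |μ| ^ (2 * t * (t - 1)) ≤ (∑ i, ∑ j, A i j) ^ (t * (t - 2)) * bicliqueSum t t A := by
  have hS : 0 < ∑ i, |x i| ^ 2 := by
    obtain ⟨i, hi⟩ := Function.ne_iff.mp hx
    exact Finset.sum_pos' (fun _ _ => by positivity)
      ⟨i, Finset.mem_univ i, pow_pos (abs_pos.mpr hi) 2⟩
  refine le_of_mul_le_mul_right ?_ (pow_pos hS (2 * t * (t - 1)))
  calc |μ| ^ (2 * t * (t - 1)) * (∑ i, |x i| ^ 2) ^ (2 * t * (t - 1))
      = (|μ| * ∑ i, |x i| ^ 2) ^ (2 * t * (t - 1)) := (mul_pow _ _ _).symm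
    _ ≤ (∑ i, ∑ j, A i j * (|x i| * |x j|)) ^ (2 * t * (t - 1)) := by
        gcongr
        exact abs_eigenvalue_mul_sum_sq_le hA hμ
    _ ≤ _ := sum_sum_mul_mul_pow_le_bicliqueSum_mul hA ht fun i => abs_nonneg (x i)

theorem abs_specRad_le {B : ℝ} (hB : 0 ≤ B)
    (h : ∀ (μ : ℝ) (x : V → ℝ), x ≠ 0 → A.mulVec x = μ • x → |μ| ≤ B) : |specRad A| ≤ B := by
  set E := {μ : ℝ | ∃ x : V → ℝ, x ≠ 0 ∧ A.mulVec x = μ • x}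
  have hE : ∀ μ ∈ E, -B ≤ μ ∧ μ ≤ B := fun μ ⟨x, hx, hμ⟩ => abs_le.mp (h μ x hx hμ)
  refine abs_le.mpr ⟨?_, Real.sSup_le (fun μ hμ => (hE μ hμ).2) hB⟩
  rcases E.eq_empty_or_nonempty with hempty | ⟨μ, hμ⟩
  · have hspec : specRad A = sSup E := rfl
    rw [hspec, hempty, Real.sSup_empty]
    exact neg_nonpos.mpr hB
  · exact (hE μ hμ).1.trans (le_csSup ⟨B, fun ν hν => (hE ν hν).2⟩ hμ)

theorem specRad_pow_le_bicliqueSum (hA : ∀ i j, 0 ≤ A i j) (ht : 2 ≤ t) :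
    specRad A ^ (2 * t * (t - 1))
      ≤ (∑ i, ∑ j, A i j) ^ (t * (t - 2)) * bicliqueSum t t A := by
  set N := 2 * t * (t - 1)
  set R := (∑ i, ∑ j, A i j) ^ (t * (t - 2)) * bicliqueSum t t A
  have hN : N ≠ 0 := Nat.mul_ne_zero (by omega) (by omega)
  have hR : 0 ≤ R := mul_nonneg
    (pow_nonneg (Finset.sum_nonneg fun i _ => Finset.sum_nonneg fun j _ => hA i j) _)
    (bicliqueSum_nonneg hA t t)
  have hroot : 0 ≤ R ^ (N : ℝ)⁻¹ := Real.rpow_nonneg hR _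
  have root_pow : (R ^ (N : ℝ)⁻¹) ^ N = R := Real.rpow_inv_natCast_pow hR hN
  have hspec : |specRad A| ≤ R ^ (N : ℝ)⁻¹ := abs_specRad_le hroot fun μ x hx hμ =>
    le_of_pow_le_pow_left₀ hN hroot <|
      (abs_eigenvalue_pow_le_bicliqueSum hA ht hx hμ).trans_eq root_pow.symm
  calc specRad A ^ N ≤ |specRad A| ^ N := (le_abs_self _).trans_eq (abs_pow _ _)
    _ ≤ (R ^ (N : ℝ)⁻¹) ^ N := by gcongr
    _ = R := root_pow

end Spectral

section Hom

variable {V : Type*} [Fintype V] (G : SimpleGraph V) [DecidableRel G.Adj]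

theorem adjMat_eq_adjMatrix {n : ℕ} (G : SimpleGraph (Fin n)) [DecidableRel G.Adj] :
    adjMat G = G.adjMatrix ℝ := by
  ext i j
  rw [adjMat, SimpleGraph.adjMatrix_apply]
  congr

theorem bicliqueSum_adjMatrix (s t : ℕ) :
    bicliqueSum s t (G.adjMatrix ℝ)
      = Nat.card (completeBipartiteGraph (Fin s) (Fin t) →g G) := by
  let e : (completeBipartiteGraph (Fin s) (Fin t) →g G) ≃
      {p : (Fin s → V) × (Fin t → V) // ∀ j k, G.Adj (p.1 j) (p.2 k)} :=
    { toFun := fun f => ⟨(f ∘ Sum.inl, f ∘ Sum.inr), fun j k => f.map_adj (by simp)⟩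
      invFun := fun p => ⟨Sum.elim p.1.1 p.1.2, by
        rintro (j | k) (j' | k') h
        · simp at h
        · exact p.2 j k'
        · exact (p.2 j' k).symm
        · simp at h⟩
      left_inv := fun f => by ext (j | k) <;> rfl
      right_inv := fun p => rfl }
  rw [Nat.card_congr e, Nat.card_eq_fintype_card, Fintype.card_subtype, Finset.card_filter,
    Nat.cast_sum, Fintype.sum_prod_type]
  simp [bicliqueSum, SimpleGraph.adjMatrix_apply, Finset.prod_ite_zero]

theorem sum_sum_adjMatrix :
    ∑ i, ∑ j, G.adjMatrix ℝ i j = 2 * Nat.card G.edgeSet := by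
  have hdegree : ∀ i, ∑ j, G.adjMatrix ℝ i j = G.degree i := fun i => by
    simp [SimpleGraph.adjMatrix_apply, ← SimpleGraph.card_neighborFinset_eq_degree,
      SimpleGraph.neighborFinset_eq_filter]
  rw [Finset.sum_congr rfl fun i _ => hdegree i, Nat.card_eq_fintype_card,
    ← SimpleGraph.edgeFinset_card]
  exact_mod_cast G.sum_degrees_eq_twice_card_edges

theorem specRad_adjMatrix_pow_le_card_hom {t : ℕ} (ht : 2 ≤ t) :
    specRad (G.adjMatrix ℝ) ^ (2 * t * (t - 1))
      ≤ (2 * Nat.card G.edgeSet : ℝ) ^ (t * (t - 2))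
        * Nat.card (completeBipartiteGraph (Fin t) (Fin t) →g G) := by
  rw [← sum_sum_adjMatrix, ← bicliqueSum_adjMatrix]
  refine specRad_pow_le_bicliqueSum (fun i j => ?_) ht
  rw [SimpleGraph.adjMatrix_apply]
  split_ifs <;> norm_num

theorem specRad_adjMatrix_sq_div_pow_mul_pow_le_card_hom {t : ℕ} (ht : 2 ≤ t)
    (hG : 0 < Nat.card G.edgeSet) :
    ((2 : ℝ) ^ ((t - 1) ^ 2))⁻¹
        * (specRad (G.adjMatrix ℝ) ^ 2 / Nat.card G.edgeSet) ^ (t * (t - 1))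
        * (Nat.card G.edgeSet : ℝ) ^ t
      ≤ (Nat.card (completeBipartiteGraph (Fin t) (Fin t) →g G) : ℝ) / 2 := by
  have hL := specRad_adjMatrix_pow_le_card_hom G ht
  set L := specRad (G.adjMatrix ℝ)
  set m := (Nat.card G.edgeSet : ℝ)
  set H := (Nat.card (completeBipartiteGraph (Fin t) (Fin t) →g G) : ℝ)
  have hm : 0 < m := Nat.cast_pos.mpr hG
  obtain ⟨r, rfl⟩ := Nat.exists_eq_add_of_le' ht
  simp only [Nat.add_sub_cancel, show r + 2 - 1 = r + 1 from rfl] at hL ⊢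
  calc ((2 : ℝ) ^ ((r + 1) ^ 2))⁻¹ * (L ^ 2 / m) ^ ((r + 2) * (r + 1)) * m ^ (r + 2)
      = L ^ (2 * (r + 2) * (r + 1)) / (2 * m) ^ ((r + 2) * r) / 2 := by
        rw [show (r + 1) ^ 2 = (r + 2) * r + 1 by ring, div_pow, ← pow_mul, ← mul_assoc,
          show (r + 2) * (r + 1) = (r + 2) * r + (r + 2) by ring]
        field_simp
        ring
    _ ≤ H / 2 := by
        gcongr
        rwa [div_le_iff₀' (by positivity)]

end Hom

section Injective

theorem pow_le_descFactorial_add_choose_two_mul (n k : ℕ) :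
    n ^ k ≤ n.descFactorial k + k.choose 2 * n ^ (k - 1) := by
  induction k with
  | zero => simp
  | succ k ih =>
    have hchoose : (k + 1).choose 2 = k + k.choose 2 := by
      rw [Nat.choose_succ_succ' k 1, Nat.choose_one_right]
    have hpow : n * (k.choose 2 * n ^ (k - 1)) = k.choose 2 * n ^ k := by
      cases k with
      | zero => simp
      | succ k => rw [Nat.add_sub_cancel, pow_succ]; ring
    have hfactor : n * n.descFactorial k ≤ n.descFactorial (k + 1) + k * n ^ k := by
      calc n * n.descFactorial k ≤ (n - k + k) * n.descFactorial k := by gcongr; omega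
        _ = n.descFactorial (k + 1) + k * n.descFactorial k := by
          rw [add_mul, Nat.descFactorial_succ]
        _ ≤ n.descFactorial (k + 1) + k * n ^ k := by
          gcongr
          exact Nat.descFactorial_le_pow n k
    calc n ^ (k + 1) = n * n ^ k := pow_succ' n k
      _ ≤ n * (n.descFactorial k + k.choose 2 * n ^ (k - 1)) := by gcongr
      _ = n * n.descFactorial k + k.choose 2 * n ^ k := by rw [mul_add, hpow]
      _ ≤ n.descFactorial (k + 1) + k * n ^ k + k.choose 2 * n ^ k := by gcongr
      _ = n.descFactorial (k + 1) + (k + 1).choose 2 * n ^ (k + 1 - 1) := by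
        rw [hchoose, Nat.add_sub_cancel, add_assoc, add_mul]

variable {α β : Type*} [Fintype α] [Fintype β]

theorem card_not_injective_le_choose_two_mul :
    Nat.card {f : α → β // ¬ Function.Injective f}
      ≤ (Fintype.card α).choose 2 * Fintype.card β ^ (Fintype.card α - 1) := by
  have hinj : Fintype.card {f : α → β // Function.Injective f}
      = (Fintype.card β).descFactorial (Fintype.card α) := by
    rw [Fintype.card_congr (Equiv.subtypeInjectiveEquivEmbedding α β), Fintype.card_embedding_eq]
  rw [Nat.card_eq_fintype_card, Fintype.card_subtype_compl, hinj, Fintype.card_fun,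
    tsub_le_iff_left]
  exact pow_le_descFactorial_add_choose_two_mul _ _

theorem card_hom_le_card_injective_add (K : SimpleGraph α) (G : SimpleGraph β) :
    Nat.card (K →g G) ≤ Nat.card {f : K →g G // Function.Injective f}
      + (Fintype.card α).choose 2 * Fintype.card β ^ (Fintype.card α - 1) := by
  have : Finite (K →g G) := DFunLike.finite _
  rw [← Nat.card_congr (Equiv.sumCompl fun f : K →g G => Function.Injective f), Nat.card_sum]
  have hmaps : Nat.card {f : K →g G // ¬ Function.Injective f}
      ≤ Nat.card {f : α → β // ¬ Function.Injective f} :=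
    Nat.card_le_card_of_injective (Subtype.map (⇑) fun _ hf => hf)
      (Subtype.map_injective _ DFunLike.coe_injective)
  exact Nat.add_le_add_left (hmaps.trans card_not_injective_le_choose_two_mul) _

end Injective

theorem stmt5_general {V : Type*} [Fintype V] (t : ℕ) (ht : 2 ≤ t) (G : SimpleGraph V)
    [DecidableRel G.Adj] (m : ℕ) (hm : m = Nat.card G.edgeSet) (hm0 : 0 < m) :
    (Nat.card {f : completeBipartiteGraph (Fin t) (Fin t) →g G // Function.Injective ⇑f} : ℝ)
          / (2 * (t.factorial : ℝ) ^ 2)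
      ≥ (((2 : ℝ) ^ ((t - 1) ^ 2))⁻¹ / (t.factorial : ℝ) ^ 2)
            * (specRad (G.adjMatrix ℝ) ^ 2 / (m : ℝ)) ^ (t * (t - 1)) * (m : ℝ) ^ t
          - (((2 * t).choose 2 : ℝ) / (2 * (t.factorial : ℝ) ^ 2))
            * (Fintype.card V : ℝ) ^ (2 * t - 1) := by
  subst hm
  have sidorenko := specRad_adjMatrix_sq_div_pow_mul_pow_le_card_hom G ht hm0
  have hom_le : (Nat.card (completeBipartiteGraph (Fin t) (Fin t) →g G) : ℝ)
      ≤ Nat.card {f : completeBipartiteGraph (Fin t) (Fin t) →g G // Function.Injective ⇑f}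
        + ((2 * t).choose 2 : ℝ) * (Fintype.card V : ℝ) ^ (2 * t - 1) := by
    have h := card_hom_le_card_injective_add (completeBipartiteGraph (Fin t) (Fin t)) G
    rw [Fintype.card_sum, Fintype.card_fin, ← two_mul] at h
    exact_mod_cast h
  linear_combination sidorenko / (t.factorial : ℝ) ^ 2 + hom_le / (2 * (t.factorial : ℝ) ^ 2)

/-- Counting copies of K_{t,t} via the spectral radius: for an n-vertex graph G
with m > 0 edges and spectral radius λ,
#K_{t,t}(G) ≥ B_t (λ²/m)^{t(t-1)} m^t − (C(2t,2)/(2(t!)²)) n^{2t−1},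
where B_t = 2^{−(t−1)²}/(t!)² and #K_{t,t}(G) = inj(K_{t,t},G)/(2(t!)²). -/
theorem stmt5 (t : ℕ) (ht : 2 ≤ t) (n : ℕ) (G : SimpleGraph (Fin n))
    (m : ℕ) (hm : m = Nat.card G.edgeSet) (hm0 : 0 < m) :
    (Nat.card {f : completeBipartiteGraph (Fin t) (Fin t) →g G // Function.Injective ⇑f} : ℝ)
          / (2 * (t.factorial : ℝ) ^ 2)
      ≥ (((2 : ℝ) ^ ((t - 1) ^ 2))⁻¹ / (t.factorial : ℝ) ^ 2)
            * (specRad (adjMat G) ^ 2 / (m : ℝ)) ^ (t * (t - 1)) * (m : ℝ) ^ t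
          - (((2 * t).choose 2 : ℝ) / (2 * (t.factorial : ℝ) ^ 2)) * (n : ℝ) ^ (2 * t - 1) := by
  simpa only [adjMat_eq_adjMatrix, Fintype.card_fin] using stmt5_general t ht G m hm hm0
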